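/- Fix r ≥ 3. For all sufficiently large k, m_k(F_r) < c_𝓘 · k^{r+1/(r−1)} · (log k)^{1 + r/(r−1)^2}, where c_𝓘 = ( r! · (50·r!·(r+1)/((r−1)!)^2)^{1/r} )^{1/(r−3/2)} · (10(r−1)/(r−3/2))^{(r−1/2)/(r−3/2)}. That is, there exists an r-graph with independent neighborhoods, chromatic number greater than k, and fewer than c_𝓘 k^{r+1/(r−1)} (log k)^{1+r/(r−1)^2} edges. -/

import Mathlib

/-- `E` is the edge set of an `r`-uniform hypergraph: every edge has exactly `r` vertices. -/
def IsRGraph (r : ℕ) {V : Type*} (E : Finset (Finset V)) : Prop :=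
  ∀ e ∈ E, e.card = r

/-- `f` is a proper coloring of the hypergraph with edge set `E`:
no edge with at least two vertices is monochromatic. -/
def IsProperColoring {V : Type*} (E : Finset (Finset V)) {k : ℕ} (f : V → Fin k) : Prop :=
  ∀ e ∈ E, 2 ≤ e.card → ∃ u ∈ e, ∃ v ∈ e, f u ≠ f v

/-- The hypergraph with edge set `E` is properly `k`-colorable,
i.e. its chromatic number is at most `k`. -/
def HypColorable {V : Type*} (E : Finset (Finset V)) (k : ℕ) : Prop :=
  ∃ f : V → Fin k, IsProperColoring E f

/-- The `r`-graph `E` contains a copy of `F_r`: there are disjoint sets `A` (of size `r-1`)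
and `B` (of size `r`) such that `B` is an edge and `A ∪ {b}` is an edge for every `b ∈ B`. -/
def HasFr (r : ℕ) {V : Type*} [DecidableEq V] (E : Finset (Finset V)) : Prop :=
  ∃ A B : Finset V, Disjoint A B ∧ A.card = r - 1 ∧ B.card = r ∧
    B ∈ E ∧ ∀ b ∈ B, insert b A ∈ E

/-!
Take a random `r`-graph on `k * s` vertices and delete from it all edges of a maximal edge-disjoint
packing of copies of `F_r`; what remains is `F_r`-free. If every `s`-set of vertices still contains
an edge, then the chromatic number exceeds `k`, because one of `k` color classes has at least `s`
vertices. An `s`-set loses all its edges only if these are covered by disjoint copies of `F_r`, each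
of which has an edge inside the `s`-set. Disjoint copies are present independently, so this is not
much more likely than the `s`-set being empty from the start as long as the expected number of such
copies is small compared with the expected number of edges in the `s`-set. This fixes `s` at about
`(k ^ (r - 1) * (log k) ^ r) ^ (1 / (r - 1) ^ 2)`, and the random `r`-graph has about
`k ^ r * s * log k` edges.

Probabilities are handled as polynomials in the odds `q` of an edge: a set of edges has weight
`q ^ #E`, and the weights of all subsets of `P` add up to `(1 + q) ^ #P`.
-/

open Finset Filter Real
open scoped Nat

section OddsWeight

variable {α : Type*}

/-- The probability, up to the factor `(1 + q) ^ #P`, that a random subset of `P` belongs to the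
family `𝓑` of subsets of `P`, when every element of `P` is present independently with odds `q`,
that is with probability `q / (1 + q)`. -/
def oddsWeight (q : ℝ) (𝓑 : Finset (Finset α)) : ℝ :=
  ∑ E ∈ 𝓑, q ^ #E

lemma oddsWeight_powerset (q : ℝ) (P : Finset α) : oddsWeight q P.powerset = (1 + q) ^ #P := by
  simpa [oddsWeight, add_comm] using sum_pow_mul_eq_add_pow q 1 P

variable {q : ℝ} (hq : 0 ≤ q)
include hq

lemma oddsWeight_mono {𝓐 𝓑 : Finset (Finset α)} (h : 𝓐 ⊆ 𝓑) :
    oddsWeight q 𝓐 ≤ oddsWeight q 𝓑 :=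
  sum_le_sum_of_subset_of_nonneg h fun _ _ _ => by positivity

variable [DecidableEq α]

lemma oddsWeight_union_le (𝓐 𝓑 : Finset (Finset α)) :
    oddsWeight q (𝓐 ∪ 𝓑) ≤ oddsWeight q 𝓐 + oddsWeight q 𝓑 := by
  rw [oddsWeight, oddsWeight, oddsWeight, ← sum_union_inter]
  exact le_add_of_nonneg_right (sum_nonneg fun _ _ => by positivity)

lemma oddsWeight_biUnion_le {ι : Type*} (s : Finset ι) (𝓑 : ι → Finset (Finset α)) :
    oddsWeight q (s.biUnion 𝓑) ≤ ∑ i ∈ s, oddsWeight q (𝓑 i) := by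
  classical
  induction s using Finset.induction_on with
  | empty => simp [oddsWeight]
  | insert i s hi ih =>
    rw [biUnion_insert, sum_insert hi]
    exact (oddsWeight_union_le hq _ _).trans (add_le_add_right ih _)

lemma oddsWeight_Icc_le (U Q : Finset α) :
    oddsWeight q (Icc U Q) ≤ q ^ #U * (1 + q) ^ #(Q \ U) := by
  by_cases hUQ : U ⊆ Q
  · have hdisj : ∀ D ∈ (Q \ U).powerset, Disjoint U D := fun D hD =>
      disjoint_sdiff.mono_right (mem_powerset.1 hD)
    have hinj : Set.InjOn (U ∪ ·) (SetLike.coe (Q \ U).powerset) := fun D hD D' hD' h => by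
      rw [← union_sdiff_cancel_left (hdisj D hD), ← union_sdiff_cancel_left (hdisj D' hD')]
      exact congrArg (· \ U) h
    rw [oddsWeight, Icc_eq_image_powerset hUQ, sum_image hinj, ← oddsWeight_powerset, oddsWeight,
      mul_sum]
    refine (sum_congr rfl fun D hD => ?_).le
    rw [card_union_of_disjoint (hdisj D hD), pow_add]
  · rw [Icc_eq_empty hUQ, oddsWeight, sum_empty]
    positivity

omit [DecidableEq α] in
lemma sum_card_mul_pow_card_le (P : Finset α) :
    ∑ E ∈ P.powerset, (#E : ℝ) * q ^ #E ≤ #P * q * (1 + q) ^ #P := by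
  classical
  have hswap : ∑ E ∈ P.powerset, (#E : ℝ) * q ^ #E = ∑ e ∈ P, oddsWeight q (Icc {e} P) := by
    simp_rw [← nsmul_eq_mul, ← sum_const, oddsWeight]
    refine sum_comm' fun E e => ?_
    simp only [mem_powerset, mem_Icc, singleton_subset_iff]
    exact ⟨fun ⟨hE, he⟩ => ⟨⟨he, hE⟩, hE he⟩, fun ⟨⟨he, hE⟩, _⟩ => ⟨hE, he⟩⟩
  rw [hswap, mul_assoc, ← nsmul_eq_mul]
  refine sum_le_card_nsmul _ _ _ fun e _ => (oddsWeight_Icc_le hq _ _).trans ?_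
  rw [card_singleton, pow_one]
  gcongr
  · linarith
  · exact sdiff_subset

omit [DecidableEq α] in
/-- Markov's inequality for the size of a random set. -/
lemma mul_oddsWeight_filter_le (P : Finset α) (K : ℝ) :
    K * oddsWeight q {E ∈ P.powerset | K ≤ #E} ≤ #P * q * (1 + q) ^ #P :=
  calc K * oddsWeight q {E ∈ P.powerset | K ≤ #E}
      ≤ ∑ E ∈ P.powerset with K ≤ #E, (#E : ℝ) * q ^ #E := by
        rw [oddsWeight, mul_sum]
        refine sum_le_sum fun E hE => ?_
        have hKE : K ≤ #E := (mem_filter.1 hE).2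
        gcongr
    _ ≤ ∑ E ∈ P.powerset, (#E : ℝ) * q ^ #E :=
        sum_le_sum_of_subset_of_nonneg (filter_subset _ _) fun _ _ _ => by positivity
    _ ≤ #P * q * (1 + q) ^ #P := sum_card_mul_pow_card_le hq P

end OddsWeight

lemma one_add_pow_le_exp {x : ℝ} (hx : 0 ≤ x) {a N : ℕ} (ha : a ≤ N) :
    (1 + x) ^ a ≤ exp (N * x) :=
  calc (1 + x) ^ a ≤ (1 + x) ^ N := pow_le_pow_right₀ (by linarith) ha
    _ ≤ exp x ^ N := by
        gcongr
        rw [add_comm]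
        exact add_one_le_exp x
    _ = exp (N * x) := (exp_nat_mul x N).symm

section Packing

variable {α : Type*} [DecidableEq α] {𝓕 𝓣 : Finset (Finset α)} {E P W : Finset α}

/-- `𝓣` is a packing of members of `𝓕` in `E`: its members are pairwise disjoint subsets of `E`. -/
structure IsPacking (𝓕 : Finset (Finset α)) (E : Finset α) (𝓣 : Finset (Finset α)) : Prop where
  subset : 𝓣 ⊆ 𝓕
  pairwiseDisjoint : (𝓣 : Set (Finset α)).PairwiseDisjoint id
  biUnion_subset : 𝓣.biUnion id ⊆ E

lemma IsPacking.insert {F : Finset α} (h : IsPacking 𝓕 E 𝓣) (hF : F ∈ 𝓕)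
    (hFE : F ⊆ E \ 𝓣.biUnion id) : IsPacking 𝓕 E (insert F 𝓣) where
  subset := insert_subset hF h.subset
  pairwiseDisjoint := by
    rw [coe_insert, Set.pairwiseDisjoint_insert]
    exact ⟨h.pairwiseDisjoint, fun G hG _ =>
      (subset_sdiff.1 hFE).2.mono_right (subset_biUnion_of_mem id hG)⟩
  biUnion_subset := by
    rw [biUnion_insert]
    exact union_subset (hFE.trans sdiff_subset) h.biUnion_subset

lemma exists_isPacking_forall_not_subset (h𝓕 : ∀ F ∈ 𝓕, F.Nonempty) (E : Finset α) :
    ∃ 𝓣, IsPacking 𝓕 E 𝓣 ∧ ∀ F ∈ 𝓕, ¬ F ⊆ E \ 𝓣.biUnion id := by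
  have hfin : {𝓣 | IsPacking 𝓕 E 𝓣}.Finite :=
    𝓕.powerset.finite_toSet.subset fun 𝓣 h𝓣 => mem_powerset.2 h𝓣.subset
  have hempty : IsPacking 𝓕 E ∅ := ⟨empty_subset _, by simp, by simp⟩
  obtain ⟨𝓣, h𝓣, hmax⟩ := hfin.exists_maximal ⟨∅, hempty⟩
  refine ⟨𝓣, h𝓣, fun F hF hFE => ?_⟩
  have hF𝓣 : F ∈ 𝓣 := hmax (h𝓣.insert hF hFE) (subset_insert F 𝓣) (mem_insert_self F 𝓣)
  have hdisj : Disjoint F F :=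
    (subset_sdiff.1 hFE).2.mono_right (subset_biUnion_of_mem id hF𝓣)
  exact (h𝓕 F hF).ne_empty (disjoint_self.1 hdisj)

/-- The elements of `E` in `W` are covered by a packing in `E` of members of `𝓕` that meet `W`.
This is what deleting a packing from `E` has to do in order to leave nothing of `E ∩ W`. -/
def IsCoveredByPacking (𝓕 : Finset (Finset α)) (W E : Finset α) : Prop :=
  ∃ 𝓣, IsPacking {F ∈ 𝓕 | ¬ Disjoint F W} E 𝓣 ∧ E ∩ W ⊆ 𝓣.biUnion id

lemma IsPacking.isCoveredByPacking (h : IsPacking 𝓕 E 𝓣) (hW : Disjoint (E \ 𝓣.biUnion id) W) :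
    IsCoveredByPacking 𝓕 W E := by
  refine ⟨{F ∈ 𝓣 | ¬ Disjoint F W}, ⟨filter_subset_filter _ h.subset, ?_, ?_⟩, fun e he => ?_⟩
  · exact h.pairwiseDisjoint.subset (coe_subset.2 (filter_subset _ _))
  · exact (biUnion_subset_biUnion_of_subset_left _ (filter_subset _ _)).trans h.biUnion_subset
  · obtain ⟨heE, heW⟩ := mem_inter.1 he
    have he𝓣 : e ∈ 𝓣.biUnion id := by
      by_contra hne
      exact disjoint_left.1 hW (mem_sdiff.2 ⟨heE, hne⟩) heW
    obtain ⟨F, hF, heF⟩ := mem_biUnion.1 he𝓣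
    exact mem_biUnion.2 ⟨F, mem_filter.2 ⟨hF, not_disjoint_iff.2 ⟨e, heF, heW⟩⟩, heF⟩

lemma card_filter_not_disjoint_le {Δ : ℕ} (hΔ : ∀ e ∈ W, #{F ∈ 𝓕 | e ∈ F} ≤ Δ) :
    #{F ∈ 𝓕 | ¬ Disjoint F W} ≤ #W * Δ :=
  calc #{F ∈ 𝓕 | ¬ Disjoint F W} = ∑ F ∈ 𝓕, if ¬ Disjoint F W then 1 else 0 := card_filter _ _
    _ ≤ ∑ F ∈ 𝓕, #(W ∩ F) := sum_le_sum fun F _ => by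
        split_ifs with hF
        · exact Nat.zero_le _
        · exact card_pos.2 (not_disjoint_iff_nonempty_inter.1 (disjoint_comm.not.1 hF))
    _ ≤ #W * Δ := sum_card_inter_le hΔ

variable {q : ℝ} (hq : 0 ≤ q)
include hq

lemma oddsWeight_Icc_mul_pow_le (hW : W ⊆ P) (U : Finset α) :
    oddsWeight q (Icc U (P \ (W \ U))) * (1 + q) ^ #W ≤ q ^ #U * (1 + q) ^ #P :=
  calc oddsWeight q (Icc U (P \ (W \ U))) * (1 + q) ^ #W
      ≤ q ^ #U * (1 + q) ^ #((P \ (W \ U)) \ U) * (1 + q) ^ #W := by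
        gcongr
        exact oddsWeight_Icc_le hq _ _
    _ = q ^ #U * (1 + q) ^ (#((P \ (W \ U)) \ U) + #W) := by rw [mul_assoc, ← pow_add]
    _ ≤ q ^ #U * (1 + q) ^ #P := by
        gcongr
        · linarith
        · rw [← card_sdiff_add_card_eq_card hW, sdiff_sdiff_left]
          gcongr
          simp

open Classical in
/-- For a fixed packing `𝓣` with union `U`, the sets `E` that contain `U` and satisfy `E ∩ W ⊆ U`
have weight `q ^ #U` times that of the sets avoiding `U ∪ W`; as `#U = m * #𝓣`, summing over
all `𝓣` is summing the odds `q ^ m` of the members of `𝓕`. -/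
lemma oddsWeight_isCoveredByPacking_le (hW : W ⊆ P) {m : ℕ} (h𝓕 : ∀ F ∈ 𝓕, #F = m) :
    oddsWeight q {E ∈ P.powerset | IsCoveredByPacking 𝓕 W E} * (1 + q) ^ #W ≤
      (1 + q ^ m) ^ #{F ∈ 𝓕 | ¬ Disjoint F W} * (1 + q) ^ #P := by
  set 𝓖 := {F ∈ 𝓕 | ¬ Disjoint F W}
  set packings : Finset (Finset (Finset α)) :=
    {𝓣 ∈ 𝓖.powerset | (𝓣 : Set (Finset α)).PairwiseDisjoint id}
  have hcover : {E ∈ P.powerset | IsCoveredByPacking 𝓕 W E} ⊆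
      packings.biUnion fun 𝓣 => Icc (𝓣.biUnion id) (P \ (W \ 𝓣.biUnion id)) := by
    intro E hE
    obtain ⟨hEP, 𝓣, h𝓣, hEW⟩ := mem_filter.1 hE
    refine mem_biUnion.2
      ⟨𝓣, mem_filter.2 ⟨mem_powerset.2 h𝓣.subset, h𝓣.pairwiseDisjoint⟩, mem_Icc.2
        ⟨h𝓣.biUnion_subset, subset_sdiff.2 ⟨mem_powerset.1 hEP, disjoint_left.2 fun e he hW => ?_⟩⟩⟩
    obtain ⟨heW, he𝓣⟩ := mem_sdiff.1 hW
    exact he𝓣 (hEW (mem_inter.2 ⟨he, heW⟩))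
  have hcard : ∀ 𝓣 ∈ packings, #(𝓣.biUnion id) = m * #𝓣 := fun 𝓣 h𝓣 => by
    obtain ⟨h𝓣𝓖, hdisj⟩ := mem_filter.1 h𝓣
    rw [card_biUnion hdisj, sum_const_nat (m := m), mul_comm]
    exact fun F hF => h𝓕 F (mem_filter.1 (mem_powerset.1 h𝓣𝓖 hF)).1
  calc oddsWeight q {E ∈ P.powerset | IsCoveredByPacking 𝓕 W E} * (1 + q) ^ #W
      ≤ ∑ 𝓣 ∈ packings,
          oddsWeight q (Icc (𝓣.biUnion id) (P \ (W \ 𝓣.biUnion id))) * (1 + q) ^ #W := by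
        rw [← sum_mul]
        gcongr
        exact (oddsWeight_mono hq hcover).trans (oddsWeight_biUnion_le hq _ _)
    _ ≤ ∑ 𝓣 ∈ packings, (q ^ m) ^ #𝓣 * (1 + q) ^ #P := sum_le_sum fun 𝓣 h𝓣 => by
        rw [← pow_mul, ← hcard 𝓣 h𝓣]
        exact oddsWeight_Icc_mul_pow_le hq hW _
    _ = oddsWeight (q ^ m) packings * (1 + q) ^ #P := (sum_mul ..).symm
    _ ≤ (1 + q ^ m) ^ #𝓖 * (1 + q) ^ #P := by
        rw [← oddsWeight_powerset (q ^ m) 𝓖]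
        gcongr
        exact oddsWeight_mono (pow_nonneg hq m) (filter_subset _ _)

open Classical in
lemma oddsWeight_biUnion_isCoveredByPacking_le {𝓦 : Finset (Finset α)} {m M Δ : ℕ}
    (h𝓕 : ∀ F ∈ 𝓕, #F = m) (hΔ : ∀ e ∈ P, #{F ∈ 𝓕 | e ∈ F} ≤ Δ)
    (h𝓦 : ∀ W ∈ 𝓦, W ⊆ P ∧ #W = M) :
    oddsWeight q (𝓦.biUnion fun W => {E ∈ P.powerset | IsCoveredByPacking 𝓕 W E}) *
      (1 + q) ^ M ≤ #𝓦 * exp ((M * Δ : ℕ) * q ^ m) * (1 + q) ^ #P :=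
  calc oddsWeight q (𝓦.biUnion fun W => {E ∈ P.powerset | IsCoveredByPacking 𝓕 W E}) *
        (1 + q) ^ M
      ≤ ∑ W ∈ 𝓦, oddsWeight q {E ∈ P.powerset | IsCoveredByPacking 𝓕 W E} * (1 + q) ^ M := by
        rw [← sum_mul]
        gcongr
        exact oddsWeight_biUnion_le hq _ _
    _ ≤ ∑ W ∈ 𝓦, exp ((M * Δ : ℕ) * q ^ m) * (1 + q) ^ #P := sum_le_sum fun W hW => by
        obtain ⟨hWP, rfl⟩ := h𝓦 W hW
        have hmeet : #{F ∈ 𝓕 | ¬ Disjoint F W} ≤ #W * Δ :=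
          card_filter_not_disjoint_le fun e he => hΔ e (hWP he)
        refine (oddsWeight_isCoveredByPacking_le hq hWP h𝓕).trans ?_
        gcongr
        exact one_add_pow_le_exp (by positivity) hmeet
    _ = #𝓦 * exp ((M * Δ : ℕ) * q ^ m) * (1 + q) ^ #P := by
        rw [sum_const, nsmul_eq_mul, mul_assoc]

/-- The deletion method: by `hK` a random subset of `P` is too large with probability less than
`1 / 2`, and by `hM` deleting a maximal packing of members of `𝓕` from it destroys some `W ∈ 𝓦`
with probability at most `1 / 2`. -/
theorem exists_subset_free_forall_not_disjoint {𝓦 : Finset (Finset α)} {m M Δ : ℕ} (hm : m ≠ 0)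
    (h𝓕 : ∀ F ∈ 𝓕, #F = m) (hΔ : ∀ e ∈ P, #{F ∈ 𝓕 | e ∈ F} ≤ Δ)
    (h𝓦 : ∀ W ∈ 𝓦, W ⊆ P ∧ #W = M) {K : ℝ} (hK : 2 * (#P * q) < K)
    (hM : 2 * (#𝓦 * exp ((M * Δ : ℕ) * q ^ m)) ≤ (1 + q) ^ M) :
    ∃ E ⊆ P, #E < K ∧ (∀ F ∈ 𝓕, ¬ F ⊆ E) ∧ ∀ W ∈ 𝓦, ¬ Disjoint E W := by
  classical
  by_contra! hcon
  set large := {E ∈ P.powerset | K ≤ (#E : ℝ)}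
  set covered := 𝓦.biUnion fun W => {E ∈ P.powerset | IsCoveredByPacking 𝓕 W E}
  have hcover : P.powerset ⊆ large ∪ covered := fun E hE => by
    rcases le_or_gt K #E with hKE | hEK
    · exact mem_union_left _ (mem_filter.2 ⟨hE, hKE⟩)
    obtain ⟨𝓣, h𝓣, hfree⟩ := exists_isPacking_forall_not_subset
      (fun F hF => card_ne_zero.1 (h𝓕 F hF ▸ hm)) E
    have hcard : (#(E \ 𝓣.biUnion id) : ℝ) < K :=
      lt_of_le_of_lt (by exact_mod_cast card_le_card sdiff_subset) hEK
    obtain ⟨W, hW, hdisj⟩ := hcon _ (sdiff_subset.trans (mem_powerset.1 hE)) hcard hfree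
    exact mem_union_right _
      (mem_biUnion.2 ⟨W, hW, mem_filter.2 ⟨hE, h𝓣.isCoveredByPacking hdisj⟩⟩)
  set Z := (1 + q) ^ #P
  have hZ : 0 < Z := by positivity
  have hlarge : 2 * oddsWeight q large < Z := by
    have hK0 : 0 < K := lt_of_le_of_lt (by positivity) hK
    refine lt_of_mul_lt_mul_left ?_ hK0.le
    linarith [mul_oddsWeight_filter_le hq P K, mul_lt_mul_of_pos_right hK hZ]
  have hcovered : 2 * oddsWeight q covered ≤ Z := by
    refine le_of_mul_le_mul_right ?_ (show 0 < (1 + q) ^ M by positivity)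
    linarith [oddsWeight_biUnion_isCoveredByPacking_le hq h𝓕 hΔ h𝓦,
      mul_le_mul_of_nonneg_right hM hZ.le]
  have htotal : Z ≤ oddsWeight q large + oddsWeight q covered :=
    (oddsWeight_powerset q P).ge.trans
      ((oddsWeight_mono hq hcover).trans (oddsWeight_union_le hq _ _))
  linarith

end Packing

section FrCopy

variable {V : Type*} [DecidableEq V]

/-- The edge set of the copy of `F_r` given by disjoint sets `A` of size `r - 1` and `B` of
size `r`. -/
def frCopy (A B : Finset V) : Finset (Finset V) :=
  insert B (B.image (insert · A))

lemma frCopy_subset_iff {A B : Finset V} {E : Finset (Finset V)} :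
    frCopy A B ⊆ E ↔ B ∈ E ∧ ∀ b ∈ B, insert b A ∈ E := by
  rw [frCopy, insert_subset_iff, image_subset_iff]

lemma card_frCopy {A B : Finset V} (hAB : Disjoint A B) (hA : A.Nonempty) :
    #(frCopy A B) = #B + 1 := by
  rw [frCopy, card_insert_of_notMem, card_image_of_injOn]
  · refine fun b hb c _ hbc => (mem_insert.1 (?_ : b ∈ insert c A)).resolve_right
      (disjoint_right.1 hAB hb)
    exact (show insert b A = insert c A from hbc) ▸ mem_insert_self b A
  · intro hB
    obtain ⟨b, -, hb⟩ := mem_image.1 hB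
    obtain ⟨a, ha⟩ := hA
    exact disjoint_left.1 hAB ha (hb ▸ mem_insert_of_mem ha)

variable [Fintype V] {r : ℕ}

/-- The edge sets of all copies of `F_r` with vertices in `V`. -/
def frCopies (r : ℕ) (V : Type*) [Fintype V] [DecidableEq V] : Finset (Finset (Finset V)) :=
  image (fun x => frCopy x.1 x.2)
    {x ∈ powersetCard (r - 1) univ ×ˢ powersetCard r univ | Disjoint x.1 x.2}

lemma mem_frCopies {F : Finset (Finset V)} :
    F ∈ frCopies r V ↔
      ∃ A B, Disjoint A B ∧ #A = r - 1 ∧ #B = r ∧ frCopy A B = F := by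
  simp only [frCopies, mem_image, mem_filter, mem_product, mem_powersetCard_univ, Prod.exists]
  grind

lemma hasFr_iff_exists_frCopies_subset {E : Finset (Finset V)} :
    HasFr r E ↔ ∃ F ∈ frCopies r V, F ⊆ E := by
  simp only [HasFr, mem_frCopies, ← frCopy_subset_iff]
  grind

lemma card_of_mem_frCopies (hr : 2 ≤ r) {F : Finset (Finset V)} (hF : F ∈ frCopies r V) :
    #F = r + 1 := by
  obtain ⟨A, B, hAB, hA, rfl, rfl⟩ := mem_frCopies.1 hF
  exact card_frCopy hAB (card_pos.1 (by omega))

/-- A copy of `F_r` through `e` is determined by `A` if `e = B`, and by `b ∈ e` and `B \ {b}` if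
`e = A ∪ {b}`. -/
lemma card_frCopies_mem_le {e : Finset V} (he : #e = r) :
    #{F ∈ frCopies r V | e ∈ F} ≤ (r + 1) * (Fintype.card V).choose (r - 1) := by
  set R := powersetCard (r - 1) (univ : Finset V)
  have hR : #R = (Fintype.card V).choose (r - 1) := card_powersetCard _ _
  have hcover : {F ∈ frCopies r V | e ∈ F} ⊆ R.image (frCopy · e) ∪
      (e ×ˢ R).image fun y => frCopy (e.erase y.1) (insert y.1 y.2) := by
    intro F hF
    obtain ⟨hF, heF⟩ := mem_filter.1 hF
    obtain ⟨A, B, hAB, hA, hB, rfl⟩ := mem_frCopies.1 hF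
    rcases mem_insert.1 heF with rfl | heF
    · exact mem_union_left _ (mem_image_of_mem _ (mem_powersetCard_univ.2 hA))
    · obtain ⟨b, hb, rfl⟩ := mem_image.1 heF
      refine mem_union_right _ (mem_image.2 ⟨(b, B.erase b), mem_product.2
        ⟨mem_insert_self b A, mem_powersetCard_univ.2 ?_⟩, ?_⟩)
      · rw [card_erase_of_mem hb, hB]
      · rw [erase_insert (disjoint_right.1 hAB hb), insert_erase hb]
  calc #{F ∈ frCopies r V | e ∈ F} ≤ #R + #(e ×ˢ R) :=
        (card_le_card hcover).trans ((card_union_le _ _).trans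
          (add_le_add card_image_le card_image_le))
    _ = (r + 1) * (Fintype.card V).choose (r - 1) := by rw [card_product, he, hR]; ring

lemma exists_frFree_forall_exists_subset (hr : 2 ≤ r) {s : ℕ} {q K : ℝ} (hq : 0 ≤ q)
    (hK : 2 * ((Fintype.card V).choose r * q) < K)
    (hs : 2 * ((Fintype.card V).choose s *
      exp ((s.choose r * ((r + 1) * (Fintype.card V).choose (r - 1)) : ℕ) * q ^ (r + 1))) ≤
        (1 + q) ^ s.choose r) :
    ∃ E : Finset (Finset V), IsRGraph r E ∧ ¬ HasFr r E ∧ #E < K ∧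
      ∀ S : Finset V, #S = s → ∃ e ∈ E, e ⊆ S := by
  set 𝓦 := (powersetCard s (univ : Finset V)).image (powersetCard r)
  have h𝓦 : ∀ W ∈ 𝓦, W ⊆ powersetCard r univ ∧ #W = s.choose r := fun W hW => by
    obtain ⟨S, hS, rfl⟩ := mem_image.1 hW
    exact ⟨powersetCard_mono (subset_univ S),
      by rw [card_powersetCard, mem_powersetCard_univ.1 hS]⟩
  have h𝓦card : #𝓦 ≤ (Fintype.card V).choose s :=
    card_image_le.trans (card_powersetCard _ _).le
  obtain ⟨E, hE, hEK, hfree, hmeet⟩ := exists_subset_free_forall_not_disjoint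
    (P := powersetCard r univ) (K := K) hq r.succ_ne_zero
    (fun _ => card_of_mem_frCopies (V := V) hr)
    (fun e he => card_frCopies_mem_le (mem_powersetCard_univ.1 he)) h𝓦
    (by rwa [card_powersetCard])
    (le_trans (by gcongr) hs)
  refine ⟨E, fun e he => mem_powersetCard_univ.1 (hE he), ?_, hEK, fun S hS => ?_⟩
  · rw [hasFr_iff_exists_frCopies_subset]
    exact fun ⟨F, hF, hFE⟩ => hfree F hF hFE
  · obtain ⟨e, heE, heS⟩ := not_disjoint_iff.1
      (hmeet _ (mem_image_of_mem _ (mem_powersetCard_univ.2 hS)))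
    exact ⟨e, heE, (mem_powersetCard.1 heS).1⟩

end FrCopy

lemma not_hypColorable_of_forall_card_eq {V : Type*} [Fintype V] {E : Finset (Finset V)}
    {k s : ℕ} (hk : 0 < k) (hV : k * s ≤ Fintype.card V) (hE : ∀ e ∈ E, 2 ≤ #e)
    (hS : ∀ S : Finset V, #S = s → ∃ e ∈ E, e ⊆ S) : ¬ HypColorable E k := by
  rintro ⟨f, hf⟩
  have : Nonempty (Fin k) := ⟨⟨0, hk⟩⟩
  obtain ⟨c, hc⟩ := Fintype.exists_le_card_fiber_of_mul_le_card f (n := s) (by simpa using hV)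
  obtain ⟨S, hSc, hScard⟩ := exists_subset_card_eq hc
  obtain ⟨e, he, heS⟩ := hS S hScard
  obtain ⟨u, hu, v, hv, huv⟩ := hf e he (hE e he)
  have hcol : ∀ w ∈ e, f w = c := fun w hw => (mem_filter.1 (hSc (heS hw))).2
  exact huv ((hcol u hu).trans (hcol v hv).symm)

section EdgeOdds

lemma exp_le_one_add_pow {q : ℝ} (hq : 0 ≤ q) (hq' : q ≤ 2 / 9) (M : ℕ) :
    exp (9 / 10 * (q * M)) ≤ (1 + q) ^ M := by
  have hlog : 9 / 10 * q ≤ log (1 + q) := by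
    refine le_trans ?_ (le_log_one_add_of_nonneg hq)
    rw [le_div_iff₀ (by positivity)]
    nlinarith
  calc exp (9 / 10 * (q * M)) = exp (9 / 10 * q) ^ M := by rw [← exp_nat_mul]; ring_nf
    _ ≤ (1 + q) ^ M := by
        gcongr
        exact (le_log_iff_exp_le (by positivity)).1 hlog

lemma choose_mul_le_exp {k : ℕ} (hk : 0 < k) (s : ℕ) :
    ((k * s).choose s : ℝ) ≤ exp (s + log k * s) :=
  calc ((k * s).choose s : ℝ) ≤ ((k * s : ℕ) : ℝ) ^ s / s ! := Nat.choose_le_pow_div s (k * s)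
    _ = (s : ℝ) ^ s / s ! * (k : ℝ) ^ s := by push_cast; ring
    _ ≤ exp s * (k : ℝ) ^ s := by
        gcongr
        exact pow_div_factorial_le_exp _ s.cast_nonneg s
    _ = exp (s + log k * s) := by
        rw [exp_add, mul_comm (log k), exp_nat_mul, exp_log (by positivity)]

lemma eventually_mul_pow_le_factorial_mul_choose {c : ℝ} (hc : c < 1) (r : ℕ) :
    ∀ᶠ s : ℕ in atTop, c * (s : ℝ) ^ r ≤ r ! * s.choose r := by
  filter_upwards [(isEquivalent_choose r).isLittleO.def (sub_pos.2 hc)] with s hs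
  have hg : 0 ≤ (s : ℝ) ^ r / r ! := by positivity
  rw [Pi.sub_apply, norm_eq_abs, abs_sub_comm, norm_of_nonneg hg] at hs
  have hcg : c * (s ^ r / r !) ≤ s.choose r := by linarith [le_of_abs_le hs]
  calc c * (s : ℝ) ^ r = r ! * (c * (s ^ r / r !)) := by field_simp
    _ ≤ r ! * s.choose r := by gcongr

/-- The constant for which the copies of `F_r` are rare enough at edge odds `edgeOdds r k s` once
`s ^ ((r - 1) ^ 2)` is at least `frConst r * k ^ (r - 1) * (log k) ^ r`. -/
noncomputable def frConst (r : ℕ) : ℝ :=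
  (2 * r !) ^ r * (4 * (r + 1) / (r - 1)!)

/-- The odds at which the edges of the random `r`-graph on `k * s` vertices are chosen. An `s`-set
is then expected to contain about `2 * s * log k` edges, which beats the number
`exp (s * log k + s)` of `s`-sets. -/
noncomputable def edgeOdds (r k s : ℕ) : ℝ :=
  2 * r ! * log k / s ^ (r - 1)

variable {r k s : ℕ}

lemma edgeOdds_nonneg (r k s : ℕ) : 0 ≤ edgeOdds r k s := by
  have : 0 ≤ log k := log_natCast_nonneg k
  unfold edgeOdds
  positivity

lemma choose_mul_edgeOdds_le (hr : r ≠ 0) (hs : 0 < s) :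
    (k * s).choose r * edgeOdds r k s ≤ 2 * k ^ r * log k * s := by
  calc (k * s).choose r * edgeOdds r k s
      ≤ ((k * s : ℕ) : ℝ) ^ r / r ! * edgeOdds r k s := by
        gcongr
        · exact edgeOdds_nonneg r k s
        · exact Nat.choose_le_pow_div r (k * s)
    _ = 2 * k ^ r * log k * s := by
        rw [edgeOdds, Nat.cast_mul, mul_pow, ← pow_sub_one_mul hr (s : ℝ)]
        field_simp

lemma mul_log_le_edgeOdds_mul_choose {c : ℝ} (hr : r ≠ 0) (hs : 0 < s)
    (hc : c * (s : ℝ) ^ r ≤ r ! * s.choose r) :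
    2 * c * (log k * s) ≤ edgeOdds r k s * s.choose r := by
  have : 0 ≤ log k := log_natCast_nonneg k
  rw [edgeOdds, div_mul_eq_mul_div, le_div_iff₀ (by positivity)]
  calc 2 * c * (log k * s) * s ^ (r - 1) = 2 * log k * (c * s ^ r) := by
        rw [← pow_sub_one_mul hr (s : ℝ)]
        ring
    _ ≤ 2 * log k * (r ! * s.choose r) := by gcongr
    _ = 2 * r ! * log k * s.choose r := by ring

lemma edgeOdds_pow_mul_choose_le (hr : r ≠ 0) (hs : 0 < s)
    (h : frConst r * k ^ (r - 1) * log k ^ r ≤ (s : ℝ) ^ ((r - 1) ^ 2)) :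
    edgeOdds r k s ^ r * ((r + 1) * (k * s).choose (r - 1)) ≤ 1 / 4 := by
  have hpow : ((s : ℝ) ^ (r - 1)) ^ r = s ^ (r - 1) * s ^ ((r - 1) ^ 2) := by
    obtain ⟨m, rfl⟩ := Nat.exists_eq_succ_of_ne_zero hr
    rw [Nat.succ_sub_one, Nat.succ_eq_add_one, ← pow_mul, ← pow_add]
    congr 1
    ring
  calc edgeOdds r k s ^ r * ((r + 1) * (k * s).choose (r - 1))
      ≤ edgeOdds r k s ^ r * ((r + 1) * (((k * s : ℕ) : ℝ) ^ (r - 1) / (r - 1)!)) := by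
        have := edgeOdds_nonneg r k s
        gcongr
        exact Nat.choose_le_pow_div (r - 1) (k * s)
    _ = frConst r * k ^ (r - 1) * log k ^ r / s ^ ((r - 1) ^ 2) / 4 := by
        rw [edgeOdds, frConst, Nat.cast_mul, div_pow, hpow, mul_pow, mul_pow (k : ℝ)]
        field_simp
    _ ≤ 1 / 4 := by
        gcongr
        exact div_le_one_of_le₀ h (by positivity)

lemma two_mul_choose_mul_exp_le_one_add_edgeOdds_pow (hr : r ≠ 0) (hs0 : 0 < s)
    (hk : 12 ≤ log k) (hchoose : 9 / 10 * (s : ℝ) ^ r ≤ r ! * s.choose r)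
    (hodds : 9 * r ! * log k ≤ (s : ℝ) ^ (r - 1))
    (hs : frConst r * k ^ (r - 1) * log k ^ r ≤ (s : ℝ) ^ ((r - 1) ^ 2)) :
    2 * ((k * s).choose s * exp ((s.choose r * ((r + 1) * (k * s).choose (r - 1)) : ℕ) *
      edgeOdds r k s ^ (r + 1))) ≤ (1 + edgeOdds r k s) ^ s.choose r := by
  have hk0 : 0 < k := Nat.pos_of_ne_zero fun h => by norm_num [h] at hk
  have hs1 : (1 : ℝ) ≤ s := by exact_mod_cast hs0
  set q := edgeOdds r k s with hq
  have hq0 : 0 ≤ q := edgeOdds_nonneg r k s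
  have hq1 : q ≤ 2 / 9 := by
    rw [hq, edgeOdds, div_le_iff₀ (by positivity)]
    linarith
  have hedges : 2 * (9 / 10) * (log k * s) ≤ q * s.choose r :=
    mul_log_le_edgeOdds_mul_choose hr hs0 hchoose
  have hcopies : ((s.choose r * ((r + 1) * (k * s).choose (r - 1)) : ℕ) : ℝ) * q ^ (r + 1) ≤
      q * s.choose r / 4 :=
    calc _ = q * s.choose r * (q ^ r * ((r + 1) * (k * s).choose (r - 1))) := by push_cast; ring
      _ ≤ q * s.choose r * (1 / 4) := by
          gcongr
          exact edgeOdds_pow_mul_choose_le hr hs0 hs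
      _ = q * s.choose r / 4 := by ring
  calc _ ≤ exp 1 * (exp (s + log k * s) * exp (q * s.choose r / 4)) := by
        gcongr
        · linarith [add_one_le_exp 1]
        · exact choose_mul_le_exp hk0 s
    _ ≤ exp (9 / 10 * (q * s.choose r)) := by
        rw [← exp_add, ← exp_add]
        gcongr
        nlinarith
    _ ≤ (1 + q) ^ s.choose r := exp_le_one_add_pow hq0 hq1 _

lemma exists_frFree_not_hypColorable (hr : 2 ≤ r) (hk : 12 ≤ log k)
    (hchoose : 9 / 10 * (s : ℝ) ^ r ≤ r ! * s.choose r)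
    (hodds : 9 * r ! * log k ≤ (s : ℝ) ^ (r - 1))
    (hs : frConst r * k ^ (r - 1) * log k ^ r ≤ (s : ℝ) ^ ((r - 1) ^ 2))
    {K : ℝ} (hK : 4 * k ^ r * log k * s < K) :
    ∃ E : Finset (Finset (Fin (k * s))),
      IsRGraph r E ∧ ¬ HasFr r E ∧ ¬ HypColorable E k ∧ #E < K := by
  have hr0 : r ≠ 0 := by omega
  have hk0 : 0 < k := Nat.pos_of_ne_zero fun h => by norm_num [h] at hk
  have hs0 : 0 < s := Nat.pos_of_ne_zero fun h => by
    rw [h, Nat.cast_zero, zero_pow (by omega)] at hodds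
    exact absurd hodds (not_le.2 (by positivity))
  have hsize : 2 * ((k * s).choose r * edgeOdds r k s) < K := by
    linarith [choose_mul_edgeOdds_le (k := k) hr0 hs0]
  obtain ⟨E, hE, hfree, hEK, hS⟩ := exists_frFree_forall_exists_subset (V := Fin (k * s)) hr
    (edgeOdds_nonneg r k s) (by rwa [Fintype.card_fin]) (by
      rw [Fintype.card_fin]
      exact two_mul_choose_mul_exp_le_one_add_edgeOdds_pow hr0 hs0 hk hchoose hodds hs)
  exact ⟨E, hE, hfree, not_hypColorable_of_forall_card_eq hk0 (Fintype.card_fin _).ge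
    (fun e he => (hE e he).symm ▸ hr) hS, hEK⟩

end EdgeOdds

section Constant

/-- The constant `c_𝓘` of the upper bound for `m_k(F_r)`. -/
noncomputable def indepNbhdConst (r : ℕ) : ℝ :=
  ((r ! : ℝ) * ((50 * r ! * (r + 1) / (r - 1)! ^ 2) ^ (1 / (r : ℝ)))) ^ (1 / ((r : ℝ) - 3 / 2)) *
    (10 * ((r : ℝ) - 1) / (r - 3 / 2)) ^ (((r : ℝ) - 1 / 2) / (r - 3 / 2))

variable {r : ℕ}

lemma one_le_frConst (hr : r ≠ 0) : 1 ≤ frConst r := by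
  have hfac : ((r - 1)! : ℝ) ≤ r ! := by exact_mod_cast Nat.factorial_le (Nat.sub_le r 1)
  have hfac1 : (1 : ℝ) ≤ r ! := by exact_mod_cast r.factorial_pos
  rw [frConst, ← mul_div_assoc, one_le_div (by positivity)]
  calc ((r - 1)! : ℝ) ≤ 2 * r ! := by linarith
    _ ≤ (2 * r !) ^ r := le_self_pow₀ (by linarith) hr
    _ ≤ (2 * r !) ^ r * (4 * (r + 1)) :=
        le_mul_of_one_le_right (by positivity) (by linarith [r.cast_nonneg (α := ℝ)])

lemma eight_mul_factorial_le_two_pow (hr : 2 ≤ r) : 8 * r ! ≤ 2 ^ r ^ 2 := by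
  induction r, hr using Nat.le_induction with
  | base => decide
  | succ r _ ih =>
    calc 8 * (r + 1)! = (r + 1) * (8 * r !) := by rw [Nat.factorial_succ]; ring
      _ ≤ 2 ^ (2 * r + 1) * 2 ^ r ^ 2 := by
          gcongr
          exact Nat.lt_two_pow_self.le.trans (Nat.pow_le_pow_right two_pos (by omega))
      _ = 2 ^ (r + 1) ^ 2 := by rw [← pow_add]; ring_nf

lemma frConst_le_two_pow (hr : 2 ≤ r) : frConst r ≤ (2 ^ r ^ 2) ^ r := by
  have hlin : 4 * (r + 1) ≤ 4 ^ r := by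
    induction r, hr using Nat.le_induction with
    | base => decide
    | succ r _ ih => rw [pow_succ]; omega
  have hfac : (1 : ℝ) ≤ (r - 1)! := by exact_mod_cast (r - 1).factorial_pos
  calc frConst r ≤ (2 * r !) ^ r * (4 * (r + 1)) := by
        unfold frConst
        gcongr
        exact div_le_self (by positivity) hfac
    _ ≤ (2 * r !) ^ r * 4 ^ r := by
        gcongr
        exact_mod_cast hlin
    _ = (8 * r !) ^ r := by rw [← mul_pow]; ring_nf
    _ ≤ (2 ^ r ^ 2) ^ r := by
        gcongr
        exact_mod_cast eight_mul_factorial_le_two_pow hr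

lemma frConst_rpow_le (hr : r ≠ 0) :
    frConst r ^ (1 / (r : ℝ)) ≤
      2 * (r ! * (50 * r ! * (r + 1) / (r - 1)! ^ 2) ^ (1 / (r : ℝ))) := by
  have hfac : ((r - 1)! : ℝ) ≤ r ! := by exact_mod_cast Nat.factorial_le (Nat.sub_le r 1)
  have hratio : 4 * (r + 1) / ((r - 1)! : ℝ) ≤ 50 * r ! * (r + 1) / (r - 1)! ^ 2 :=
    calc 4 * (r + 1) / ((r - 1)! : ℝ) = 4 * (r - 1)! * (r + 1) / (r - 1)! ^ 2 := by field_simp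
      _ ≤ 50 * r ! * (r + 1) / (r - 1)! ^ 2 := by
          gcongr
          norm_num
  rw [frConst, mul_rpow (by positivity) (by positivity), one_div,
    pow_rpow_inv_natCast (by positivity) hr, ← mul_assoc]
  gcongr

/-- The exponents of `frConst r` on the two sides differ by at most `1 / r ^ 3`, which costs only a
factor `2` because `frConst r ≤ 2 ^ r ^ 3`. -/
lemma frConst_rpow_le_two_mul (hr : 2 ≤ r) :
    frConst r ^ (1 / ((r : ℝ) - 1) ^ 2) ≤
      2 * (frConst r ^ (1 / (r : ℝ))) ^ (1 / ((r : ℝ) - 3 / 2)) := by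
  have hr' : (2 : ℝ) ≤ r := by exact_mod_cast hr
  set x := (r : ℝ) / (r - 1) ^ 2
  set y := 1 / ((r : ℝ) - 3 / 2)
  have hxy : x - y ≤ ((r ^ 2 : ℕ) : ℝ)⁻¹ := by
    have hsq : 0 < ((r : ℝ) - 1) ^ 2 := by nlinarith
    rw [div_sub_div _ _ hsq.ne' (by linarith), Nat.cast_pow, ← one_div,
      div_le_div_iff₀ (by nlinarith) (by positivity)]
    nlinarith [mul_nonneg (sub_nonneg.2 hr') (sub_nonneg.2 hr'), pow_nonneg (sub_nonneg.2 hr') 3]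
  have hF : 1 ≤ frConst r := one_le_frConst (by omega)
  set W := frConst r ^ (1 / (r : ℝ))
  have hW : 1 ≤ W := one_le_rpow hF (by positivity)
  have hW' : W ≤ 2 ^ r ^ 2 :=
    calc W ≤ ((2 ^ r ^ 2) ^ r) ^ (1 / (r : ℝ)) :=
          rpow_le_rpow (by positivity) (frConst_le_two_pow hr) (by positivity)
      _ = 2 ^ r ^ 2 := by rw [one_div, pow_rpow_inv_natCast (by positivity) (by omega)]
  calc frConst r ^ (1 / ((r : ℝ) - 1) ^ 2) = W ^ x := by
        rw [← rpow_mul (by positivity)]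
        congr 1
        simp only [x]
        field_simp
    _ = W ^ (x - y) * W ^ y := by rw [← rpow_add (by positivity), sub_add_cancel]
    _ ≤ 2 * W ^ y := by
        gcongr
        calc W ^ (x - y) ≤ W ^ ((r ^ 2 : ℕ) : ℝ)⁻¹ := by gcongr
          _ ≤ (2 ^ r ^ 2) ^ ((r ^ 2 : ℕ) : ℝ)⁻¹ := by gcongr
          _ = 2 := pow_rpow_inv_natCast zero_le_two (by positivity)

lemma five_mul_frConst_rpow_lt (hr : 2 ≤ r) :
    5 * frConst r ^ (1 / ((r : ℝ) - 1) ^ 2) < indepNbhdConst r := by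
  have hr' : (2 : ℝ) ≤ r := by exact_mod_cast hr
  have hden : 0 < (r : ℝ) - 3 / 2 := by linarith
  set y := 1 / ((r : ℝ) - 3 / 2) with hy
  set C := 10 * ((r : ℝ) - 1) / (r - 3 / 2) with hC
  set D := r ! * (50 * r ! * (r + 1) / (r - 1)! ^ 2 : ℝ) ^ (1 / (r : ℝ))
  have hC10 : 10 < C := by
    rw [hC, lt_div_iff₀ hden]
    linarith
  have hexp : ((r : ℝ) - 1 / 2) / (r - 3 / 2) = 1 + y := by
    rw [hy, show (r : ℝ) - 1 / 2 = (r - 3 / 2) + 1 by ring, add_div, div_self hden.ne']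
  calc 5 * frConst r ^ (1 / ((r : ℝ) - 1) ^ 2)
      ≤ 5 * (2 * (frConst r ^ (1 / (r : ℝ))) ^ y) := by
        gcongr
        exact frConst_rpow_le_two_mul hr
    _ ≤ 5 * (2 * (2 * D) ^ y) := by
        have := one_le_frConst (r := r) (by omega)
        gcongr
        exact frConst_rpow_le (by omega)
    _ = 10 * (2 * D) ^ y := by ring
    _ ≤ 10 * (C * D) ^ y := by
        gcongr
        linarith
    _ < C * (C * D) ^ y := by gcongr
    _ = indepNbhdConst r := by
        rw [indepNbhdConst, hexp, rpow_add (by positivity), rpow_one, mul_rpow (by positivity)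
          (by positivity)]
        ring

end Constant

section ClassSize

/-- The number of vertices per color, before rounding up: the least real `s` satisfying the
hypothesis on `frConst` in `exists_frFree_not_hypColorable`. -/
noncomputable def classSize (r k : ℕ) : ℝ :=
  (frConst r * k ^ (r - 1) * log k ^ r) ^ (((r - 1) ^ 2 : ℕ) : ℝ)⁻¹

variable {r k : ℕ}

lemma classSize_nonneg (hr : r ≠ 0) (k : ℕ) : 0 ≤ classSize r k := by
  have : 0 ≤ log k := log_natCast_nonneg k
  have := one_le_frConst hr
  unfold classSize
  positivity

lemma classSize_pow (hr : 2 ≤ r) (k : ℕ) :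
    classSize r k ^ ((r - 1) ^ 2) = frConst r * k ^ (r - 1) * log k ^ r := by
  have : 0 ≤ log k := log_natCast_nonneg k
  have := one_le_frConst (r := r) (by omega)
  exact rpow_inv_natCast_pow (by positivity) (pow_ne_zero 2 (by omega))

lemma le_classSize_pow (hr : 2 ≤ r) (hk : 1 ≤ log k) : k ≤ classSize r k ^ (r - 1) := by
  have := classSize_nonneg (r := r) (by omega) k
  refine le_of_pow_le_pow_left₀ (by omega : r - 1 ≠ 0) (by positivity) ?_
  rw [← pow_mul, ← sq, classSize_pow hr, mul_right_comm]
  exact le_mul_of_one_le_left (by positivity)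
    (one_le_mul_of_one_le_of_one_le (one_le_frConst (by omega)) (one_le_pow₀ hk))

lemma tendsto_classSize (hr : 2 ≤ r) : Tendsto (classSize r) atTop atTop := by
  have hlog : Tendsto (fun k : ℕ => log k ^ r) atTop atTop :=
    (tendsto_pow_atTop (by omega)).comp (tendsto_log_atTop.comp tendsto_natCast_atTop_atTop)
  have hpow : Tendsto (fun k : ℕ => (k : ℝ) ^ (r - 1)) atTop atTop :=
    (tendsto_pow_atTop (by omega)).comp tendsto_natCast_atTop_atTop
  have hF : 0 < frConst r := one_pos.trans_le (one_le_frConst (by omega))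
  have hexp : (0 : ℝ) < (((r - 1) ^ 2 : ℕ) : ℝ)⁻¹ :=
    inv_pos.2 (Nat.cast_pos.2 (pow_pos (by omega) 2))
  exact (tendsto_rpow_atTop hexp).comp ((hpow.const_mul_atTop hF).atTop_mul_atTop₀ hlog)

lemma pow_mul_log_mul_classSize (hr : 2 ≤ r) (hk : 0 < log k) :
    k ^ r * log k * classSize r k = frConst r ^ (1 / ((r : ℝ) - 1) ^ 2) *
      ((k : ℝ) ^ ((r : ℝ) + 1 / (r - 1)) * log k ^ ((1 : ℝ) + r / (r - 1) ^ 2)) := by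
  have : (0 : ℝ) < r - 1 := sub_pos.2 (by exact_mod_cast hr)
  have hF : 0 < frConst r := one_pos.trans_le (one_le_frConst (by omega))
  have hk0 : (0 : ℝ) < k := Nat.cast_pos.2 (Nat.pos_of_ne_zero fun h => by norm_num [h] at hk)
  have hcast : ((r - 1 : ℕ) : ℝ) = r - 1 := Nat.cast_pred (by omega)
  rw [classSize, Nat.cast_pow, hcast, ← one_div, mul_rpow (by positivity) (by positivity),
    mul_rpow (by positivity) (by positivity), ← rpow_natCast_mul hk0.le,
    ← rpow_natCast_mul hk.le, hcast, rpow_add hk0, rpow_add hk, rpow_natCast, rpow_one,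
    mul_one_div, mul_one_div, sq, div_self_mul_self', one_div ((r : ℝ) - 1)]
  ring

end ClassSize

lemma eventually_mul_log_le (c : ℝ) : ∀ᶠ x in atTop, c * log x ≤ x := by
  filter_upwards [(isLittleO_log_id_atTop.const_mul_left c).bound one_pos, eventually_ge_atTop 0]
    with x hx hx0
  rw [one_mul, id, norm_of_nonneg hx0] at hx
  exact (le_abs_self _).trans hx

theorem indep_neighborhoods_upper_bound_general {r : ℕ} (hr : 2 ≤ r) :
    ∀ᶠ k : ℕ in atTop, ∃ (n : ℕ) (E : Finset (Finset (Fin n))),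
      IsRGraph r E ∧ ¬ HasFr r E ∧ ¬ HypColorable E k ∧
      (#E : ℝ) < indepNbhdConst r *
        ((k : ℝ) ^ ((r : ℝ) + 1 / (r - 1)) * log k ^ ((1 : ℝ) + r / (r - 1) ^ 2)) := by
  have hloglim : Tendsto (fun k : ℕ => log k) atTop atTop :=
    tendsto_log_atTop.comp tendsto_natCast_atTop_atTop
  have hloglt : ∀ᶠ k : ℕ in atTop, 9 * r ! * log k ≤ k :=
    tendsto_natCast_atTop_atTop.eventually (eventually_mul_log_le _)
  have hchoose : ∀ᶠ k : ℕ in atTop,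
      9 / 10 * (⌈classSize r k⌉₊ : ℝ) ^ r ≤ r ! * ⌈classSize r k⌉₊.choose r :=
    (tendsto_nat_ceil_atTop.comp (tendsto_classSize hr)).eventually
      (eventually_mul_pow_le_factorial_mul_choose (by norm_num) r)
  filter_upwards [hloglim.eventually_ge_atTop 12, hloglt, hchoose,
    (tendsto_classSize hr).eventually_ge_atTop 4,
    eventually_gt_atTop 0] with k hk12 hkr hks ht hk0
  have hk1 : 1 ≤ log k := by linarith
  have ht0 := classSize_nonneg (r := r) (by omega) k
  have hts : classSize r k ≤ ⌈classSize r k⌉₊ := Nat.le_ceil _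
  refine ⟨_, exists_frFree_not_hypColorable hr hk12 hks
    (hkr.trans ((le_classSize_pow hr hk1).trans (by gcongr)))
    ((classSize_pow hr k).ge.trans (by gcongr)) ?_⟩
  calc 4 * k ^ r * log k * ⌈classSize r k⌉₊
      ≤ 4 * k ^ r * log k * (5 / 4 * classSize r k) := by
        gcongr
        linarith [Nat.ceil_lt_add_one ht0]
    _ = 5 * (k ^ r * log k * classSize r k) := by ring
    _ < _ := by
        rw [pow_mul_log_mul_classSize hr (by linarith), ← mul_assoc]
        gcongr
        exact five_mul_frConst_rpow_lt hr

/-- **Theorem (upper bound for independent neighborhoods).** Fix `r ≥ 3`. For all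
sufficiently large `k` there is an `r`-graph with independent neighborhoods, chromatic
number greater than `k`, and fewer than `c_𝓘 k^(r+1/(r-1)) (log k)^(1 + r/(r-1)²)` edges,
where `c_𝓘 = (r! (50 r! (r+1)/((r-1)!)²)^(1/r))^(1/(r-3/2)) · (10(r-1)/(r-3/2))^((r-1/2)/(r-3/2))`. -/
theorem indep_neighborhoods_upper_bound (r : ℕ) (hr : 3 ≤ r) :
    ∃ k₀ : ℕ, ∀ k : ℕ, k₀ ≤ k →
      ∃ (n : ℕ) (E : Finset (Finset (Fin n))),
        IsRGraph r E ∧ ¬ HasFr r E ∧ ¬ HypColorable E k ∧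
        (E.card : ℝ) <
          (((r.factorial : ℝ) *
              ((50 * (r.factorial : ℝ) * ((r : ℝ) + 1) / ((r - 1).factorial : ℝ) ^ 2)
                ^ (1 / (r : ℝ)))) ^ (1 / ((r : ℝ) - 3 / 2)) *
            ((10 * ((r : ℝ) - 1) / ((r : ℝ) - 3 / 2))
              ^ (((r : ℝ) - 1 / 2) / ((r : ℝ) - 3 / 2)))) *
          ((k : ℝ) ^ ((r : ℝ) + 1 / ((r : ℝ) - 1)) *
            (Real.log k) ^ ((1 : ℝ) + (r : ℝ) / ((r : ℝ) - 1) ^ 2)) :=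
  eventually_atTop.1 (indep_neighborhoods_upper_bound_general (by omega))
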